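/- arXiv:1911.10634 — 3 statements merged into one kernel-verified Lean document; each statement's English description precedes it below -/
import Mathlib

section
/- The sum over all primes p ≠ 3 of (1/4)·(log((p−1)/(p+1)))² is strictly less than 0.395. -/
/-!
Since `¼ (log ((p - 1) / (p + 1)))² = (artanh (1 / p))²` and `(artanh t)² = t² + ⅔ t⁴ + O(t⁶)`, for
`p ≥ 4` a term is at most `-log (1 - p⁻²) - ⅓ log (1 - p⁻⁴) = p⁻² + ⅚ p⁻⁴ + O(p⁻⁶)`. By the Euler
products for `ζ(2) = π² / 6` and `ζ(4) = π⁴ / 90`, this majorant sums over all primes to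
`log (π² / 6) + ⅓ log (π⁴ / 90)`. Treating the primes `2` and `3` exactly leaves
`(log 3)² / 4 + log (π² / 9) + ⅓ log (5 π⁴ / 486) ≈ 0.3947`.
-/

open Real

section EulerProduct

theorem hasSum_primes_neg_log_one_sub {f : ℕ →*₀ ℝ} (hf : Summable (‖f ·‖)) :
    HasSum (fun p : Nat.Primes => -log (1 - f p)) (log (∑' n, f n)) := by
  have factor_pos (p : Nat.Primes) : 0 < 1 - f p :=
    sub_pos.2 <| (le_abs_self _).trans_lt <|
      hf.of_norm.norm_lt_one (f := f.toMonoidHom) p.prop.one_lt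
  have summable_log : Summable fun p : Nat.Primes => -log (1 - f p) := by
    simp only [sub_eq_add_neg]
    exact (summable_log_one_add_of_summable (hf.of_norm.neg.subtype Nat.Prime)).neg
  have exp_tsum : exp (∑' p : Nat.Primes, -log (1 - f p)) = ∑' n, f n := by
    rw [← EulerProduct.eulerProduct_completely_multiplicative_tprod hf]
    refine summable_log.hasSum.rexp.tprod_eq.symm.trans (tprod_congr fun p => ?_)
    rw [Function.comp_apply, exp_neg, exp_log (factor_pos p)]
  rw [← exp_tsum, log_exp]
  exact summable_log.hasSum

theorem hasSum_primes_neg_log_one_sub_inv_pow {k : ℕ} (hk : 1 < k) :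
    HasSum (fun p : Nat.Primes => -log (1 - ((p : ℝ) ^ k)⁻¹))
      (log (∑' n : ℕ, ((n : ℝ) ^ k)⁻¹)) := by
  let invPow : ℕ →*₀ ℝ :=
    (invMonoidWithZeroHom.comp (powMonoidWithZeroHom (zero_lt_one.trans hk).ne')).comp
      (Nat.castRingHom ℝ).toMonoidWithZeroHom
  exact hasSum_primes_neg_log_one_sub (f := invPow) (summable_nat_pow_inv.2 hk).norm

/-- The summand of `log ζ(2) + ⅓ log ζ(4)` in its Euler product expansion, as a function of the
prime. The weight `⅓` exceeds `⅙`, which is what makes it dominate `(artanh x⁻¹) ^ 2` for large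
`x`, and is small enough for the total in the theorem to stay below `0.395`. -/
noncomputable def eulerMajorant (x : ℝ) : ℝ :=
  -log (1 - (x ^ 2)⁻¹) + 1 / 3 * -log (1 - (x ^ 4)⁻¹)

theorem hasSum_primes_eulerMajorant :
    HasSum (fun p : Nat.Primes => eulerMajorant p)
      (log (π ^ 2 / 6) + 1 / 3 * log (π ^ 4 / 90)) := by
  have zeta_two : ∑' n : ℕ, ((n : ℝ) ^ 2)⁻¹ = π ^ 2 / 6 := by
    simpa only [one_div] using hasSum_zeta_two.tsum_eq
  have zeta_four : ∑' n : ℕ, ((n : ℝ) ^ 4)⁻¹ = π ^ 4 / 90 := by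
    simpa only [one_div] using hasSum_zeta_four.tsum_eq
  rw [← zeta_two, ← zeta_four]
  exact (hasSum_primes_neg_log_one_sub_inv_pow (by norm_num)).add
    ((hasSum_primes_neg_log_one_sub_inv_pow (by norm_num)).mul_left _)

end EulerProduct

section Pointwise

theorem add_sq_div_two_le_neg_log_one_sub {u : ℝ} (hu₀ : 0 ≤ u) (hu₁ : u < 1) :
    u + u ^ 2 / 2 ≤ -log (1 - u) := by
  have partial_sum_le := sum_le_hasSum (Finset.range 2) (fun n _ => by positivity)
    (hasSum_pow_div_log_of_abs_lt_one (abs_lt.2 ⟨by linarith, hu₁⟩))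
  norm_num [Finset.sum_range_succ] at partial_sum_le
  exact partial_sum_le

theorem artanh_le_add_cube_div_three_add {t : ℝ} (ht₀ : 0 ≤ t) (ht₁ : t < 1) :
    artanh t ≤ t + t ^ 3 / 3 + t ^ 5 / (1 - t ^ 2) := by
  have taylor_bound := log_div_le_sum_range_add ht₀ ht₁ 2
  rw [← artanh_eq_half_log ⟨by linarith, ht₁.le⟩] at taylor_bound
  norm_num [Finset.sum_range_succ] at taylor_bound
  exact taylor_bound

theorem sq_artanh_le_sq_add_pow_four {t : ℝ} (ht₀ : 0 ≤ t) (ht₁ : t ≤ 1 / 4) :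
    artanh t ^ 2 ≤ t ^ 2 + 5 / 6 * t ^ 4 := by
  have sq_le : t ^ 2 ≤ 1 / 16 := by nlinarith
  have remainder_le : t ^ 5 / (1 - t ^ 2) ≤ t ^ 3 * (1 / 15) := by
    rw [div_le_iff₀ (by linarith)]
    nlinarith [pow_nonneg ht₀ 3]
  have artanh_le : artanh t ≤ t * (1 + 2 / 5 * t ^ 2) := by
    linarith [artanh_le_add_cube_div_three_add ht₀ (by linarith)]
  calc artanh t ^ 2 ≤ (t * (1 + 2 / 5 * t ^ 2)) ^ 2 :=
        pow_le_pow_left₀ (artanh_nonneg ht₀) artanh_le 2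
    _ = t ^ 2 + 4 / 5 * t ^ 4 + 4 / 25 * t ^ 2 * t ^ 4 := by ring
    _ ≤ t ^ 2 + 5 / 6 * t ^ 4 := by nlinarith [pow_nonneg ht₀ 4]

theorem sq_artanh_inv_le_eulerMajorant {x : ℝ} (hx : 4 ≤ x) :
    artanh x⁻¹ ^ 2 ≤ eulerMajorant x := by
  have inv_nonneg : 0 ≤ x⁻¹ := by positivity
  have inv_le : x⁻¹ ≤ 1 / 4 := by simpa using inv_anti₀ (by norm_num) hx
  have le_neg_log_sq : x⁻¹ ^ 2 + x⁻¹ ^ 4 / 2 ≤ -log (1 - x⁻¹ ^ 2) := by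
    linarith [add_sq_div_two_le_neg_log_one_sub (sq_nonneg x⁻¹) (by nlinarith)]
  have le_neg_log_pow_four : x⁻¹ ^ 4 ≤ -log (1 - x⁻¹ ^ 4) := by
    linarith [log_le_sub_one_of_pos (x := 1 - x⁻¹ ^ 4)
      (sub_pos.2 (pow_lt_one₀ inv_nonneg (by linarith) four_ne_zero))]
  rw [eulerMajorant, ← inv_pow, ← inv_pow]
  linarith [sq_artanh_le_sq_add_pow_four inv_nonneg inv_le]

theorem one_fourth_mul_sq_log_eq_sq_artanh_inv {x : ℝ} (hx : 1 < x) :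
    1 / 4 * log ((x - 1) / (x + 1)) ^ 2 = artanh x⁻¹ ^ 2 := by
  have inv_ratio : (1 + x⁻¹) / (1 - x⁻¹) = ((x - 1) / (x + 1))⁻¹ := by
    have : x - 1 ≠ 0 := by linarith
    field_simp
  have inv_mem : x⁻¹ ∈ Set.Icc (-1) 1 :=
    ⟨by linarith [inv_pos.2 (zero_lt_one.trans hx)], (inv_lt_one_of_one_lt₀ hx).le⟩
  rw [artanh_eq_half_log inv_mem, inv_ratio, log_inv]
  ring

end Pointwise

section Sum

theorem artanh_inv_two : artanh 2⁻¹ = log 3 / 2 := by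
  rw [artanh_eq_half_log ⟨by norm_num, by norm_num⟩]
  norm_num
  ring

theorem log_zeta_sub_eulerMajorant_two_sub_eulerMajorant_three :
    log (π ^ 2 / 6) + 1 / 3 * log (π ^ 4 / 90) - eulerMajorant 2 - eulerMajorant 3 =
      log (π ^ 2 / 9) + 1 / 3 * log (5 * π ^ 4 / 486) := by
  have zeta_two_factors : π ^ 2 / 9 = π ^ 2 / 6 * (1 - (2 ^ 2)⁻¹) * (1 - (3 ^ 2)⁻¹) := by ring
  have zeta_four_factors : 5 * π ^ 4 / 486 = π ^ 4 / 90 * (1 - (2 ^ 4)⁻¹) * (1 - (3 ^ 4)⁻¹) := by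
    ring
  rw [zeta_two_factors, zeta_four_factors, log_mul (by positivity) (by norm_num),
    log_mul (by positivity) (by norm_num), log_mul (by positivity) (by norm_num),
    log_mul (by positivity) (by norm_num), eulerMajorant, eulerMajorant]
  ring

open Function in
theorem tsum_subtype_ne_le_of_hasSum {ι : Type*} {P : ι → Prop} {f g : ι → ℝ} {a : ℝ} {i j : ι}
    (hi : P i) (hj : P j) (hij : i ≠ j) (hf : ∀ x, 0 ≤ f x)
    (hfg : ∀ x, P x → x ≠ i → x ≠ j → f x ≤ g x) (hg : HasSum (fun x : {x // P x} => g x) a) :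
    ∑' x : {x // P x ∧ x ≠ j}, f x ≤ a - g i - g j + f i := by
  classical
  let majorant : ι → ℝ := update (update ({x | P x}.indicator g) i (f i)) j 0
  have hasSum_majorant : HasSum majorant (a - g i - g j + f i) := by
    have hasSum_update := ((hasSum_subtype_iff_indicator.1 hg).update i (f i)).update j 0
    rw [update_of_ne hij.symm, Set.indicator_of_mem hi, Set.indicator_of_mem hj] at hasSum_update
    convert! hasSum_update using 1
    ring
  have term_nonneg (x : ι) : 0 ≤ {x | P x ∧ x ≠ j}.indicator f x :=
    Set.indicator_nonneg (fun x _ => hf x) x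
  have term_le (x : ι) : {x | P x ∧ x ≠ j}.indicator f x ≤ majorant x := by
    rcases eq_or_ne x j with rfl | hxj
    · simp [majorant]
    rcases eq_or_ne x i with rfl | hxi
    · simp [majorant, hxj, hi]
    by_cases hx : P x
    · simpa [majorant, hxj, hxi, hx] using hfg x hx hxi hxj
    · simp [majorant, hxj, hxi, hx]
  calc ∑' x : {x // P x ∧ x ≠ j}, f x = ∑' x, {x | P x ∧ x ≠ j}.indicator f x :=
        tsum_subtype {x | P x ∧ x ≠ j} f
    _ ≤ ∑' x, majorant x :=
        (hasSum_majorant.summable.of_nonneg_of_le term_nonneg term_le).tsum_le_tsum term_le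
          hasSum_majorant.summable
    _ = a - g i - g j + f i := hasSum_majorant.tsum_eq

theorem tsum_primes_ne_three_sq_artanh_inv_le :
    ∑' p : {p : ℕ // p.Prime ∧ p ≠ 3}, artanh (p : ℝ)⁻¹ ^ 2 ≤
      log 3 ^ 2 / 4 + log (π ^ 2 / 9) + 1 / 3 * log (5 * π ^ 4 / 486) := by
  have four_le {p : ℕ} (hp : p.Prime) (h2 : p ≠ 2) (h3 : p ≠ 3) : (4 : ℝ) ≤ p := by
    have := hp.two_le
    exact_mod_cast (by omega : 4 ≤ p)
  have sum_le := tsum_subtype_ne_le_of_hasSum (f := fun n : ℕ => artanh (n : ℝ)⁻¹ ^ 2)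
    (g := fun n : ℕ => eulerMajorant n) Nat.prime_two Nat.prime_three (by norm_num)
    (fun _ => sq_nonneg _)
    (fun p hp h2 h3 => sq_artanh_inv_le_eulerMajorant (four_le hp h2 h3))
    hasSum_primes_eulerMajorant
  have artanh_sq : artanh 2⁻¹ ^ 2 = log 3 ^ 2 / 4 := by rw [artanh_inv_two]; ring
  push_cast at sum_le
  linarith [log_zeta_sub_eulerMajorant_two_sub_eulerMajorant_three]

end Sum

section Numerics

theorem sq_log_three_div_four_lt : log 3 ^ 2 / 4 < 0.30174 := by
  nlinarith [log_three_lt_d9, log_nonneg (show (1 : ℝ) ≤ 3 by norm_num)]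

theorem log_pi_sq_div_nine_lt : log (π ^ 2 / 9) < 0.0924 := by
  rw [log_lt_iff_lt_exp (by positivity)]
  calc π ^ 2 / 9 < 3.1416 ^ 2 / 9 := by gcongr; exact pi_lt_d4
    _ < 1 + 0.0924 + 0.0924 ^ 2 / 2 := by norm_num
    _ ≤ exp 0.0924 := quadratic_le_exp_of_nonneg (by norm_num)

theorem log_five_mul_pi_pow_four_div_lt : log (5 * π ^ 4 / 486) < 0.0022 := by
  have ratio_lt : 5 * π ^ 4 / 486 < 1.0022 :=
    calc 5 * π ^ 4 / 486 < 5 * 3.1416 ^ 4 / 486 := by gcongr; exact pi_lt_d4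
      _ < 1.0022 := by norm_num
  linarith [log_le_sub_one_of_pos (x := 5 * π ^ 4 / 486) (by positivity)]

end Numerics

/-- The sum over all primes `p ≠ 3` of `(1/4)·(log((p−1)/(p+1)))²` is
strictly less than `0.395`. -/
theorem stmt_15 :
    ∑' p : {p : ℕ // p.Prime ∧ p ≠ 3},
        (1 / 4 : ℝ) *
          Real.log ((((p : ℕ) : ℝ) - 1) / (((p : ℕ) : ℝ) + 1)) ^ 2 < 0.395 := by
  calc
    _ = ∑' p : {p : ℕ // p.Prime ∧ p ≠ 3}, artanh (p : ℝ)⁻¹ ^ 2 :=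
      tsum_congr fun p => one_fourth_mul_sq_log_eq_sq_artanh_inv (Nat.one_lt_cast.2 p.prop.1.one_lt)
    _ ≤ log 3 ^ 2 / 4 + log (π ^ 2 / 9) + 1 / 3 * log (5 * π ^ 4 / 486) :=
      tsum_primes_ne_three_sq_artanh_inv_le
    _ < 0.30174 + 0.0924 + 1 / 3 * 0.0022 := by
      gcongr
      exacts [sq_log_three_div_four_lt, log_pi_sq_div_nine_lt, log_five_mul_pi_pow_four_div_lt]
    _ < 0.395 := by norm_num
end

section
/- Let s be a complex number with Re(s) > 1, and let τ(m) denote the number of positive divisors of m. Then Σ_{n=1}^{∞} τ(n²)/n^s = ζ(s)³/ζ(2s), where ζ is the Riemann zeta function. -/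
/-!
As `τ(p ^ (2k)) = 2k + 1` for primes `p`, the function `n ↦ τ(n²)` is the Dirichlet convolution of
three copies of the constant function `1` with the function carrying `μ(m)` at each square `m²` and
vanishing off the squares: convolving the latter with `1` gives the values `1, 1, 0, 0, …` at
`1, p, p², …`, a second convolution gives `1, 2, 2, …`, and a third gives `1, 3, 5, …`. The L-series
of the four factors at `s` are `ζ(s)`, three times, and `∑ μ(m) / m ^ (2s) = 1 / ζ(2s)`.
-/

open ArithmeticFunction Function
open scoped ArithmeticFunction.Moebius ArithmeticFunction.sigma ArithmeticFunction.zeta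
open scoped LSeries.notation

section PowExpand

variable {R : Type*}

/-- The arithmetic function with value `f m` at `m ^ k` and `0` off the `k`-th powers, the analogue
of `Polynomial.expand` for Dirichlet series: its L-series at `s` is that of `f` at `k * s`.
At `k = 0`, where `m ↦ m ^ k` is not injective, it is a junk value. -/
noncomputable def powExpand [Zero R] (k : ℕ) (f : ArithmeticFunction R) : ArithmeticFunction R :=
  toArithmeticFunction (extend (· ^ k) f 0)

variable {k : ℕ}

lemma coe_powExpand [Zero R] (hk : k ≠ 0) (f : ArithmeticFunction R) :
    ⇑(powExpand k f) = extend (· ^ k) f 0 := by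
  ext n
  rcases eq_or_ne n 0 with rfl | hn
  · simpa [hk] using ((Nat.pow_left_injective hk).extend_apply (f : ℕ → R) 0 0).symm
  · exact if_neg hn

lemma powExpand_pow [Zero R] (hk : k ≠ 0) (f : ArithmeticFunction R) (m : ℕ) :
    powExpand k f (m ^ k) = f m := by
  rw [coe_powExpand hk]
  exact (Nat.pow_left_injective hk).extend_apply _ _ m

lemma powExpand_eq_zero [Zero R] (hk : k ≠ 0) (f : ArithmeticFunction R) {n : ℕ}
    (hn : ¬∃ m, m ^ k = n) : powExpand k f n = 0 := by
  rw [coe_powExpand hk]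
  exact extend_apply' _ _ n hn

lemma isMultiplicative_powExpand [MonoidWithZero R] (hk : k ≠ 0) {f : ArithmeticFunction R}
    (hf : f.IsMultiplicative) : (powExpand k f).IsMultiplicative := by
  refine ⟨by simpa [hf.map_one] using powExpand_pow hk f 1, fun {m n} hmn => ?_⟩
  by_cases hpow : ∃ c, c ^ k = m * n
  · obtain ⟨c, hc⟩ := hpow
    obtain ⟨a, rfl⟩ := exists_eq_pow_of_mul_eq_pow (Nat.isUnit_iff.mpr hmn) hc.symm
    obtain ⟨b, rfl⟩ := exists_eq_pow_of_mul_eq_pow (Nat.isUnit_iff.mpr hmn.symm)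
      ((mul_comm n _).trans hc.symm)
    have hab : a.Coprime b :=
      (Nat.coprime_pow_left_iff hk.bot_lt _ _).mp ((Nat.coprime_pow_right_iff hk.bot_lt _ _).mp hmn)
    rw [← mul_pow, powExpand_pow hk, powExpand_pow hk, powExpand_pow hk,
      hf.map_mul_of_coprime hab]
  · rw [powExpand_eq_zero hk f hpow]
    by_cases hm : ∃ a, a ^ k = m
    · have hn : ¬∃ b, b ^ k = n := by
        rintro ⟨b, rfl⟩
        obtain ⟨a, rfl⟩ := hm
        exact hpow ⟨a * b, mul_pow a b k⟩
      rw [powExpand_eq_zero hk f hn, mul_zero]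
    · rw [powExpand_eq_zero hk f hm, zero_mul]

lemma LSeriesHasSum_powExpand (hk : k ≠ 0) {f : ArithmeticFunction ℂ} {s a : ℂ} :
    LSeriesHasSum ↗(powExpand k f) s a ↔ LSeriesHasSum ↗f (k * s) a := by
  have hinj : Injective fun m : ℕ => m ^ k := Nat.pow_left_injective hk
  have hterm_pow (m : ℕ) : LSeries.term ↗(powExpand k f) s (m ^ k) = LSeries.term ↗f (k * s) m := by
    rcases eq_or_ne m 0 with rfl | hm
    · simp [hk]
    · rw [LSeries.term_of_ne_zero (pow_ne_zero k hm), LSeries.term_of_ne_zero hm,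
        powExpand_pow hk, Nat.cast_pow, Complex.natCast_cpow_natCast_mul]
  have hterm_zero (n : ℕ) (hn : n ∉ Set.range fun m : ℕ => m ^ k) :
      LSeries.term ↗(powExpand k f) s n = 0 := by
    simp [LSeries.term, powExpand_eq_zero hk f hn]
  rw [LSeriesHasSum, LSeriesHasSum, ← hinj.hasSum_iff hterm_zero]
  simp only [comp_def, hterm_pow]

end PowExpand

section PrimePowers

variable {R : Type*} {p : ℕ}

lemma mul_zeta_apply_prime_pow [Semiring R] (f : ArithmeticFunction R) (hp : p.Prime) (i : ℕ) :
    (f * ζ) (p ^ i) = ∑ j ∈ Finset.range (i + 1), f (p ^ j) := by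
  rw [coe_mul_zeta_apply, Nat.sum_divisors_prime_pow hp]

variable [Ring R]

lemma powExpand_moebius_apply_prime_pow {k : ℕ} (hk : k ≠ 0) (hp : p.Prime) (i : ℕ) :
    powExpand k (μ : ArithmeticFunction R) (p ^ i) =
      (if i = 0 then 1 else 0) - if i = k then 1 else 0 := by
  by_cases hpow : ∃ m, m ^ k = p ^ i
  · obtain ⟨m, hm⟩ := hpow
    obtain ⟨j, -, rfl⟩ := (Nat.dvd_prime_pow hp).mp (hm ▸ dvd_pow_self m hk)
    obtain rfl : j * k = i := Nat.pow_right_injective hp.two_le ((pow_mul p j k).trans hm)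
    rw [← hm, powExpand_pow hk, intCoe_apply]
    rcases eq_or_ne j 0 with rfl | hj
    · simp [hk.symm]
    · simp only [moebius_apply_prime_pow hp hj, mul_eq_zero, hj, hk, or_self, if_false, zero_sub,
        mul_eq_right₀ hk]
      split_ifs <;> simp
  · have hi_zero : i ≠ 0 := by
      rintro rfl
      exact hpow ⟨1, by simp⟩
    have hi_k : i ≠ k := by
      rintro rfl
      exact hpow ⟨p, rfl⟩
    rw [powExpand_eq_zero hk _ hpow, if_neg hi_zero, if_neg hi_k, sub_zero]

lemma powExpand_moebius_mul_zeta_apply_prime_pow {k : ℕ} (hk : k ≠ 0) (hp : p.Prime) (i : ℕ) :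
    (powExpand k (μ : ArithmeticFunction R) * ζ) (p ^ i) = if i < k then 1 else 0 := by
  rw [mul_zeta_apply_prime_pow _ hp]
  simp only [powExpand_moebius_apply_prime_pow hk hp, Finset.sum_sub_distrib,
    Finset.sum_ite_eq', Finset.mem_range]
  split_ifs <;> first | omega | simp

lemma powExpand_two_moebius_mul_zeta_sq_apply_prime_pow (hp : p.Prime) (i : ℕ) :
    (powExpand 2 (μ : ArithmeticFunction R) * ζ ^ 2) (p ^ i) = if i = 0 then 1 else 2 := by
  rw [sq, ← mul_assoc, mul_zeta_apply_prime_pow _ hp]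
  simp only [powExpand_moebius_mul_zeta_apply_prime_pow two_ne_zero hp]
  rcases i with _ | i
  · rw [Finset.sum_range_one]
    simp
  · rw [Finset.sum_range_succ', Finset.sum_range_succ']
    simp [one_add_one_eq_two]

lemma powExpand_two_moebius_mul_zeta_cube_apply_prime_pow (hp : p.Prime) (i : ℕ) :
    (powExpand 2 (μ : ArithmeticFunction R) * ζ ^ 3) (p ^ i) = 2 * i + 1 := by
  rw [pow_succ, ← mul_assoc, mul_zeta_apply_prime_pow _ hp]
  simp only [powExpand_two_moebius_mul_zeta_sq_apply_prime_pow hp]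
  rw [Finset.sum_range_succ']
  simp [Nat.cast_comm]

end PrimePowers

/-- The arithmetic function `n ↦ τ(n²)`. -/
def cardDivisorsSq : ArithmeticFunction ℕ where
  toFun n := (n ^ 2).divisors.card
  map_zero' := by simp

lemma cardDivisorsSq_apply (n : ℕ) : cardDivisorsSq n = (n ^ 2).divisors.card := rfl

lemma isMultiplicative_cardDivisorsSq : cardDivisorsSq.IsMultiplicative := by
  refine ⟨by simp [cardDivisorsSq_apply], fun {m n} hmn => ?_⟩
  simp only [cardDivisorsSq_apply, mul_pow, (hmn.pow 2 2).card_divisors_mul]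

lemma cardDivisorsSq_apply_prime_pow {p : ℕ} (hp : p.Prime) (i : ℕ) :
    cardDivisorsSq (p ^ i) = 2 * i + 1 := by
  rw [cardDivisorsSq_apply, ← pow_mul, ← sigma_zero_apply, sigma_zero_apply_prime_pow hp, mul_comm]

lemma powExpand_two_moebius_mul_zeta_cube_eq_cardDivisorsSq {R : Type*} [CommRing R] :
    powExpand 2 (μ : ArithmeticFunction R) * ζ ^ 3 = cardDivisorsSq := by
  have hμ : (powExpand 2 (μ : ArithmeticFunction R)).IsMultiplicative :=
    isMultiplicative_powExpand two_ne_zero isMultiplicative_moebius.intCast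
  have hζ : ((ζ : ArithmeticFunction R) ^ 3).IsMultiplicative := by
    rw [pow_three']
    exact (isMultiplicative_zeta.natCast.mul isMultiplicative_zeta.natCast).mul
      isMultiplicative_zeta.natCast
  refine (hμ.mul hζ).eq_iff_eq_on_prime_powers _ _
    isMultiplicative_cardDivisorsSq.natCast |>.mpr fun p i hp => ?_
  rw [powExpand_two_moebius_mul_zeta_cube_apply_prime_pow hp, natCoe_apply,
    cardDivisorsSq_apply_prime_pow hp]
  norm_cast

lemma LSeriesHasSum_moebius {s : ℂ} (hs : 1 < s.re) : LSeriesHasSum ↗μ s (riemannZeta s)⁻¹ := by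
  have hmul : riemannZeta s * L ↗μ s = 1 := by
    rw [← LSeries_zeta_eq_riemannZeta hs, LSeries_zeta_mul_Lseries_moebius hs]
  rw [← eq_inv_of_mul_eq_one_right hmul]
  exact (LSeriesSummable_moebius_iff.mpr hs).LSeriesHasSum

lemma LSeriesHasSum_cardDivisorsSq {s : ℂ} (hs : 1 < s.re) :
    LSeriesHasSum ↗(cardDivisorsSq : ArithmeticFunction ℂ) s
      (riemannZeta s ^ 3 / riemannZeta (2 * s)) := by
  have hs_two : 1 < (2 * s).re := by
    simp only [Complex.mul_re, Complex.re_ofNat, Complex.im_ofNat, zero_mul, sub_zero]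
    linarith
  have hζ : LSeriesHasSum ↗(ζ : ArithmeticFunction ℂ) s (riemannZeta s) := LSeriesHasSum_zeta hs
  have hμ : LSeriesHasSum ↗(powExpand 2 (μ : ArithmeticFunction ℂ)) s (riemannZeta (2 * s))⁻¹ :=
    (LSeriesHasSum_powExpand two_ne_zero).mpr (LSeriesHasSum_moebius hs_two)
  rw [← powExpand_two_moebius_mul_zeta_cube_eq_cardDivisorsSq, pow_three', pow_three',
    div_eq_inv_mul]
  exact LSeriesHasSum_mul hμ (LSeriesHasSum_mul (LSeriesHasSum_mul hζ hζ) hζ)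

/-- For `Re(s) > 1`, the Dirichlet series of `τ(n²)` (where `τ` is the
divisor-counting function) equals `ζ(s)³/ζ(2s)`. -/
theorem stmt_18 (s : ℂ) (hs : 1 < s.re) :
    ∑' n : ℕ, ((n ^ 2).divisors.card : ℂ) / (n : ℂ) ^ s =
      riemannZeta s ^ 3 / riemannZeta (2 * s) := by
  rw [← (LSeriesHasSum_cardDivisorsSq hs).LSeries_eq, LSeries]
  refine tsum_congr fun n => ?_
  rw [LSeries.term_def₀ (by simp), natCoe_apply, cardDivisorsSq_apply, Complex.cpow_neg,
    div_eq_mul_inv]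
end

section
/- Let f : ℝ → ℝ be a function which is Lipschitz with constant K and satisfies |f(x)| ≤ C for all real x, where K > 0 and C > 0. Then for all real numbers α and β, the (absolutely convergent) sum over all pairs of positive integers (n, m) such that n·m is a perfect square of (f(nα) − f(nβ))·(f(mα) − f(mβ))/(n·m) is at most 92 · |α − β|^{2/3} · K^{2/3} · C^{4/3}. -/
/-!
Write `a n = f (n α) - f (n β)`, so that `|a n| ≤ L n` with `L = K |α - β|`, and `|a n| ≤ M` with
`M = 2 C`. Interpolating between the two bounds at the smaller index, and using the second one at
the larger index, gives `|a n * a m| ≤ L ^ θ * M ^ (2 - θ) * min n m ^ θ` for every `θ ∈ [0, 1]`.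
The pairs with `n m` a square are the pairs `(g u², g v²)`, and `min (g u²) (g v²) = g (min u v)²`,
so the sum of `min n m ^ θ / (n m)` is at most
`∑ g, g ^ (θ - 2) * ∑ u v, min u v ^ (2 θ) / (u v)²`.
Summing first over the larger of `u` and `v`, by `∑ v > u, v⁻² ≤ u⁻¹`, bounds the inner sum by
`ζ(4 - 2θ) + 2 ζ(3 - 2θ)`, which is finite for `θ < 1`. The theorem is the case `θ = 2/3`.
-/

open Set

open scoped ENNReal

namespace SquareProduct

section ZetaTails

variable {s : ℝ}

theorem antitoneOn_rpow_neg_Ici (hs : 0 ≤ s) {c : ℝ} (hc : 0 < c) :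
    AntitoneOn (fun x : ℝ ↦ x ^ (-s)) (Ici c) :=
  (Real.antitoneOn_rpow_Ioi_of_exponent_nonpos (neg_nonpos.2 hs)).mono fun _ hx ↦
    hc.trans_le hx

theorem tsum_nat_add_rpow_neg_le (hs : 1 < s) {N : ℕ} (hN : 0 < N) :
    ∑' n : ℕ, ((n + N + 1 : ℕ) : ℝ) ^ (-s) ≤ (N : ℝ) ^ (1 - s) / (s - 1) := by
  have hN' : (0 : ℝ) < N := Nat.cast_pos.2 hN
  calc ∑' n : ℕ, ((n + N + 1 : ℕ) : ℝ) ^ (-s)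
      ≤ ∫ x in Ioi (N : ℝ), x ^ (-s) :=
        (antitoneOn_rpow_neg_Ici (by linarith) hN').tsum_comp_add_le_integral N
          (integrableOn_Ioi_rpow_of_lt (by linarith) hN')
          fun x hx ↦ Real.rpow_nonneg (hN'.trans hx).le _
    _ = (N : ℝ) ^ (1 - s) / (s - 1) := by
        rw [integral_Ioi_rpow_of_lt (by linarith) hN', neg_add_eq_sub, neg_div, ← div_neg, neg_sub]

theorem tsum_pnat_ofReal_add_rpow_neg_le (hs : 1 < s) (N : ℕ+) :
    ∑' k : ℕ+, ENNReal.ofReal (((N + k : ℕ+) : ℝ) ^ (-s)) ≤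
      ENNReal.ofReal ((N : ℝ) ^ (1 - s) / (s - 1)) := by
  have hsum : Summable fun n : ℕ ↦ ((n + N + 1 : ℕ) : ℝ) ^ (-s) := by
    simpa only [add_assoc] using
      (summable_nat_add_iff ((N : ℕ) + 1)).2 (Real.summable_nat_rpow.2 (by linarith))
  calc ∑' k : ℕ+, ENNReal.ofReal (((N + k : ℕ+) : ℝ) ^ (-s))
      = ∑' n : ℕ, ENNReal.ofReal (((n + N + 1 : ℕ) : ℝ) ^ (-s)) := by
        rw [← Equiv.pnatEquivNat.symm.tsum_eq]
        refine tsum_congr fun n ↦ ?_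
        rw [Equiv.pnatEquivNat_symm_apply, PNat.add_coe, Nat.succPNat_coe, Nat.succ_eq_add_one,
          ← add_assoc, add_comm (N : ℕ)]
    _ = ENNReal.ofReal (∑' n : ℕ, ((n + N + 1 : ℕ) : ℝ) ^ (-s)) :=
        (ENNReal.ofReal_tsum_of_nonneg (fun _ ↦ by positivity) hsum).symm
    _ ≤ _ := ENNReal.ofReal_le_ofReal (tsum_nat_add_rpow_neg_le hs N.pos)

theorem tsum_pnat_eq_add_tsum_one_add (h : ℕ+ → ℝ≥0∞) :
    ∑' n, h n = h 1 + ∑' k, h (1 + k) := by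
  simp_rw [← Equiv.pnatEquivNat.symm.tsum_eq]
  rw [tsum_eq_zero_add' ENNReal.summable]
  refine congr_arg₂ _ rfl (tsum_congr fun n ↦ congr_arg h (PNat.eq ?_))
  simp only [Equiv.pnatEquivNat_symm_apply, Nat.succPNat_coe, PNat.add_coe, PNat.one_coe]
  omega

theorem tsum_pnat_ofReal_rpow_neg_le (hs : 1 < s) :
    ∑' n : ℕ+, ENNReal.ofReal ((n : ℝ) ^ (-s)) ≤ ENNReal.ofReal (s / (s - 1)) := by
  have hs' : 0 < s - 1 := sub_pos.2 hs
  calc ∑' n : ℕ+, ENNReal.ofReal ((n : ℝ) ^ (-s))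
      ≤ ENNReal.ofReal 1 + ENNReal.ofReal (1 / (s - 1)) := by
        rw [tsum_pnat_eq_add_tsum_one_add]
        simpa using tsum_pnat_ofReal_add_rpow_neg_le hs 1
    _ = ENNReal.ofReal (s / (s - 1)) := by
        rw [← ENNReal.ofReal_add zero_le_one (by positivity)]
        congr 1
        field_simp
        ring

end ZetaTails

section MinKernel

theorem tsum_pnat_prod_le_of_symm {h : ℕ+ → ℕ+ → ℝ≥0∞} (hsymm : ∀ u v, h u v = h v u) :
    ∑' p : ℕ+ × ℕ+, h p.1 p.2 ≤ ∑' u, h u u + 2 * ∑' u, ∑' k, h u (u + k) := by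
  let φ : ℕ+ ⊕ (ℕ+ × ℕ+) ⊕ (ℕ+ × ℕ+) → ℕ+ × ℕ+ :=
    Sum.elim (fun u ↦ (u, u)) (Sum.elim (fun p ↦ (p.1, p.1 + p.2)) (fun p ↦ (p.1 + p.2, p.1)))
  have hφ : Function.Surjective φ := by
    rintro ⟨u, v⟩
    rcases lt_trichotomy u v with huv | rfl | hvu
    · exact ⟨.inr (.inl (u, v - u)), Prod.ext rfl (PNat.add_sub_of_lt huv)⟩
    · exact ⟨.inl u, rfl⟩
    · exact ⟨.inr (.inr (v, u - v)), Prod.ext (PNat.add_sub_of_lt hvu) rfl⟩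
  calc ∑' p : ℕ+ × ℕ+, h p.1 p.2
      ≤ ∑' q, h (φ q).1 (φ q).2 := ENNReal.tsum_le_tsum_comp_of_surjective hφ fun p ↦ h p.1 p.2
    _ = ∑' u, h u u +
          (∑' p : ℕ+ × ℕ+, h p.1 (p.1 + p.2) + ∑' p : ℕ+ × ℕ+, h (p.1 + p.2) p.1) := by
        rw [ENNReal.summable.tsum_sum ENNReal.summable, ENNReal.summable.tsum_sum ENNReal.summable]
        rfl
    _ = ∑' u, h u u + 2 * ∑' u, ∑' k, h u (u + k) := by
        rw [tsum_congr fun p : ℕ+ × ℕ+ ↦ hsymm (p.1 + p.2) p.1, ← two_mul, ENNReal.tsum_prod']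

variable {r t : ℝ}

theorem tsum_pnat_ofReal_rpow_mul_add_rpow_neg_le (hr : 1 < r) (ht : t < 2 * r - 2) :
    ∑' u : ℕ+, ∑' k : ℕ+,
        ENNReal.ofReal ((u : ℝ) ^ (t - r) * ((u + k : ℕ+) : ℝ) ^ (-r)) ≤
      ENNReal.ofReal ((2 * r - 1 - t) / ((r - 1) * (2 * r - 2 - t))) := by
  have : 0 < r - 1 := sub_pos.2 hr
  calc ∑' u : ℕ+, ∑' k : ℕ+,
        ENNReal.ofReal ((u : ℝ) ^ (t - r) * ((u + k : ℕ+) : ℝ) ^ (-r))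
      ≤ ∑' u : ℕ+, ENNReal.ofReal (1 / (r - 1)) *
          ENNReal.ofReal ((u : ℝ) ^ (-(2 * r - 1 - t))) := by
        refine ENNReal.tsum_le_tsum fun u ↦ ?_
        have hu : (0 : ℝ) < u := Nat.cast_pos.2 u.pos
        have hexp : (u : ℝ) ^ (-(2 * r - 1 - t)) = (u : ℝ) ^ (t - r) * (u : ℝ) ^ (1 - r) := by
          rw [← Real.rpow_add hu]
          ring_nf
        simp_rw [ENNReal.ofReal_mul (Real.rpow_nonneg hu.le _), ENNReal.tsum_mul_left]
        grw [tsum_pnat_ofReal_add_rpow_neg_le hr u]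
        rw [← ENNReal.ofReal_mul (by positivity), ← ENNReal.ofReal_mul (by positivity), hexp]
        exact (congr_arg ENNReal.ofReal (by ring)).le
    _ ≤ ENNReal.ofReal (1 / (r - 1)) *
          ENNReal.ofReal ((2 * r - 1 - t) / (2 * r - 1 - t - 1)) := by
        rw [ENNReal.tsum_mul_left]
        gcongr
        exact tsum_pnat_ofReal_rpow_neg_le (by linarith)
    _ = _ := by
        rw [← ENNReal.ofReal_mul (by positivity), div_mul_div_comm, one_mul]
        ring_nf

theorem tsum_pnat_prod_ofReal_min_rpow_mul_le (hr : 1 < r) (ht : t < 2 * r - 2) :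
    ∑' p : ℕ+ × ℕ+, ENNReal.ofReal ((min p.1 p.2 : ℕ+) ^ t * ((p.1 : ℝ) * p.2) ^ (-r)) ≤
      ENNReal.ofReal ((2 * r - t) / (2 * r - 1 - t) +
        2 * ((2 * r - 1 - t) / ((r - 1) * (2 * r - 2 - t)))) := by
  have hkernel (u v : ℕ+) (huv : u ≤ v) :
      (min u v : ℕ+) ^ t * ((u : ℝ) * v) ^ (-r) = (u : ℝ) ^ (t - r) * (v : ℝ) ^ (-r) := by
    rw [min_eq_left huv, Real.mul_rpow (by positivity) (by positivity), ← mul_assoc,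
      ← Real.rpow_add (Nat.cast_pos.2 u.pos), sub_eq_add_neg]
  have hdiag (u : ℕ+) : (u : ℝ) ^ (t - r) * (u : ℝ) ^ (-r) = (u : ℝ) ^ (-(2 * r - t)) := by
    rw [← Real.rpow_add (Nat.cast_pos.2 u.pos)]
    ring_nf
  calc ∑' p : ℕ+ × ℕ+, ENNReal.ofReal ((min p.1 p.2 : ℕ+) ^ t * ((p.1 : ℝ) * p.2) ^ (-r))
      ≤ ∑' u : ℕ+, ENNReal.ofReal ((u : ℝ) ^ (-(2 * r - t))) +
          2 * ∑' u : ℕ+, ∑' k : ℕ+,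
            ENNReal.ofReal ((u : ℝ) ^ (t - r) * ((u + k : ℕ+) : ℝ) ^ (-r)) := by
        refine (tsum_pnat_prod_le_of_symm
          (h := fun u v ↦ ENNReal.ofReal ((min u v : ℕ+) ^ t * ((u : ℝ) * v) ^ (-r)))
          fun u v ↦ by rw [min_comm, mul_comm (u : ℝ)]).trans_eq ?_
        simp only [hkernel _ _ le_rfl, hkernel _ _ (PNat.lt_add_right _ _).le, hdiag]
    _ ≤ ENNReal.ofReal ((2 * r - t) / (2 * r - t - 1)) +
          2 * ENNReal.ofReal ((2 * r - 1 - t) / ((r - 1) * (2 * r - 2 - t))) := by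
        gcongr
        · exact tsum_pnat_ofReal_rpow_neg_le (by linarith)
        · exact tsum_pnat_ofReal_rpow_mul_add_rpow_neg_le hr ht
    _ = _ := by
        rw [sub_right_comm, ← ENNReal.ofReal_ofNat 2, ← ENNReal.ofReal_mul zero_le_two,
          ENNReal.ofReal_add (div_nonneg (by linarith) (by linarith))]
        exact mul_nonneg zero_le_two
          (div_nonneg (by linarith) (mul_nonneg (by linarith) (by linarith)))

end MinKernel

/-- The index set of the sum: pairs of positive integers whose product is a perfect square. -/
abbrev SquarePair : Type :=
  {q : ℕ × ℕ // 0 < q.1 ∧ 0 < q.2 ∧ IsSquare (q.1 * q.2)}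

/-- The parametrization `(g, u, v) ↦ (g u², g v²)` of the pairs whose product is a perfect square.
It is onto but not injective, which is enough for bounding sums of nonnegative terms. -/
def SquarePair.ofTriple (p : ℕ+ × ℕ+ × ℕ+) : SquarePair :=
  ⟨(p.1 * p.2.1 ^ 2, p.1 * p.2.2 ^ 2),
    mul_pos p.1.pos (pow_pos p.2.1.pos 2), mul_pos p.1.pos (pow_pos p.2.2.pos 2),
    ⟨p.1 * p.2.1 * p.2.2, by ring⟩⟩

theorem exists_eq_sq_of_coprime_of_isSquare_mul {a b : ℕ} (hab : a.Coprime b)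
    (h : IsSquare (a * b)) : ∃ u, a = u ^ 2 := by
  obtain ⟨s, hs⟩ := h
  exact exists_eq_pow_of_mul_eq_pow (Nat.isUnit_iff.2 hab) (hs.trans (sq s).symm)

theorem isSquare_of_isSquare_sq_mul {g k : ℕ} (hg : 0 < g) (h : IsSquare (g ^ 2 * k)) :
    IsSquare k := by
  obtain ⟨r, hr⟩ := h
  obtain ⟨s, rfl⟩ : g ∣ r := (Nat.pow_dvd_pow_iff two_ne_zero).1 ⟨k, by rw [hr, sq]⟩
  exact ⟨s, Nat.eq_of_mul_eq_mul_left (pow_pos hg 2) (by rw [hr]; ring)⟩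

theorem SquarePair.ofTriple_surjective : Function.Surjective SquarePair.ofTriple := by
  rintro ⟨⟨n, m⟩, hn, hm, hnm⟩
  obtain ⟨g, a, b, hg, hab, rfl, rfl⟩ := Nat.exists_coprime' (Nat.gcd_pos_of_pos_left m hn)
  have hsq : IsSquare (a * b) :=
    isSquare_of_isSquare_sq_mul hg (by convert hnm using 1; ring)
  obtain ⟨u, rfl⟩ := exists_eq_sq_of_coprime_of_isSquare_mul hab hsq
  obtain ⟨v, rfl⟩ := exists_eq_sq_of_coprime_of_isSquare_mul hab.symm (mul_comm _ b ▸ hsq)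
  have hu : 0 < u := Nat.pos_of_ne_zero fun h ↦ by simp [h] at hn
  have hv : 0 < v := Nat.pos_of_ne_zero fun h ↦ by simp [h] at hm
  exact ⟨(⟨g, hg⟩, ⟨u, hu⟩, ⟨v, hv⟩), Subtype.ext (Prod.ext (mul_comm _ _) (mul_comm _ _))⟩

section Interpolation

variable {x y a b L M θ : ℝ}

theorem le_rpow_mul_rpow_one_sub (hx : 0 ≤ x) (hxa : x ≤ a) (hxb : x ≤ b) (hθ : 0 ≤ θ)
    (hθ' : θ ≤ 1) : x ≤ a ^ θ * b ^ (1 - θ) := by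
  have hsub : 0 ≤ 1 - θ := sub_nonneg.2 hθ'
  calc x = x ^ θ * x ^ (1 - θ) := by
        rw [← Real.rpow_add_of_nonneg hx hθ hsub, add_sub_cancel, Real.rpow_one]
    _ ≤ a ^ θ * b ^ (1 - θ) := by
        have ha : 0 ≤ a := hx.trans hxa
        gcongr

theorem abs_mul_le_rpow_mul_min_rpow (hL : 0 ≤ L) (ha : 0 ≤ a) (hb : 0 ≤ b)
    (hxa : |x| ≤ L * a) (hyb : |y| ≤ L * b) (hxM : |x| ≤ M) (hyM : |y| ≤ M)
    (hθ : 0 ≤ θ) (hθ' : θ ≤ 1) :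
    |x * y| ≤ L ^ θ * M ^ (2 - θ) * min a b ^ θ := by
  wlog hab : a ≤ b generalizing x y a b
  · rw [mul_comm x, min_comm]
    exact this hb ha hyb hxa hyM hxM (le_of_not_ge hab)
  have hM : 0 ≤ M := (abs_nonneg x).trans hxM
  calc |x * y| ≤ ((L * a) ^ θ * M ^ (1 - θ)) * M := by
        rw [abs_mul]
        gcongr
        exact le_rpow_mul_rpow_one_sub (abs_nonneg x) hxa hxM hθ hθ'
    _ = L ^ θ * M ^ (2 - θ) * min a b ^ θ := by
        rw [min_eq_left hab, Real.mul_rpow hL ha, mul_assoc,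
          ← Real.rpow_add_one' hM (by linarith), show 1 - θ + 1 = 2 - θ by ring]
        ring

end Interpolation

section SquarePairSum

/-- The constant `ζ(2 - θ) (ζ(4 - 2θ) + 2 ζ(3 - 2θ))` of the bound, with each `ζ(s)` replaced by
its upper bound `s / (s - 1)`. -/
noncomputable def squarePairConst (θ : ℝ) : ℝ :=
  (2 - θ) / (1 - θ) * ((4 - 2 * θ) / (3 - 2 * θ) + (3 - 2 * θ) / (1 - θ))

variable {θ : ℝ}

theorem min_rpow_mul_inv_ofTriple (g u v : ℕ+) :
    min ((g : ℝ) * u ^ 2) (g * v ^ 2) ^ θ * (((g : ℝ) * u ^ 2) * (g * v ^ 2))⁻¹ =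
      (g : ℝ) ^ (-(2 - θ)) * ((min u v : ℕ+) ^ (2 * θ) * ((u : ℝ) * v) ^ (-2 : ℝ)) := by
  have hg : (0 : ℝ) < g := Nat.cast_pos.2 g.pos
  have hmin : min ((g : ℝ) * u ^ 2) (g * v ^ 2) = g * (min u v : ℕ+) ^ 2 := by
    have hmono : Monotone fun w : ℕ+ ↦ (g : ℝ) * w ^ 2 := fun w w' h ↦ by
      have : (w : ℝ) ≤ w' := Nat.cast_le.2 h
      dsimp only
      gcongr
    exact (hmono.map_min (a := u) (b := v)).symm
  rw [hmin, Real.mul_rpow hg.le (by positivity), ← Real.rpow_natCast_mul (by positivity),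
    neg_sub, Real.rpow_sub hg, Real.rpow_neg (by positivity), Real.rpow_two, Real.rpow_two]
  push_cast
  field_simp

theorem tsum_squarePair_ofReal_min_rpow_div_le (hθ : θ < 1) :
    ∑' q : SquarePair,
        ENNReal.ofReal (min (q.1.1 : ℝ) q.1.2 ^ θ * ((q.1.1 : ℝ) * q.1.2)⁻¹) ≤
      ENNReal.ofReal (squarePairConst θ) := by
  calc ∑' q : SquarePair,
        ENNReal.ofReal (min (q.1.1 : ℝ) q.1.2 ^ θ * ((q.1.1 : ℝ) * q.1.2)⁻¹)
      ≤ ∑' p : ℕ+ × ℕ+ × ℕ+, ENNReal.ofReal ((p.1 : ℝ) ^ (-(2 - θ))) *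
          ENNReal.ofReal ((min p.2.1 p.2.2 : ℕ+) ^ (2 * θ) *
            ((p.2.1 : ℝ) * p.2.2) ^ (-2 : ℝ)) := by
        refine (ENNReal.tsum_le_tsum_comp_of_surjective
          SquarePair.ofTriple_surjective _).trans_eq (tsum_congr fun p ↦ ?_)
        rw [← ENNReal.ofReal_mul (by positivity), ← min_rpow_mul_inv_ofTriple]
        simp only [SquarePair.ofTriple, Nat.cast_mul, Nat.cast_pow]
    _ = (∑' g : ℕ+, ENNReal.ofReal ((g : ℝ) ^ (-(2 - θ)))) *
          ∑' p : ℕ+ × ℕ+, ENNReal.ofReal ((min p.1 p.2 : ℕ+) ^ (2 * θ) *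
            ((p.1 : ℝ) * p.2) ^ (-2 : ℝ)) := by
        simp only [ENNReal.tsum_prod', ENNReal.tsum_mul_left, ENNReal.tsum_mul_right]
    _ ≤ ENNReal.ofReal ((2 - θ) / (2 - θ - 1)) * ENNReal.ofReal _ := by
        gcongr
        · exact tsum_pnat_ofReal_rpow_neg_le (by linarith)
        · exact tsum_pnat_prod_ofReal_min_rpow_mul_le one_lt_two (by linarith)
    _ = ENNReal.ofReal (squarePairConst θ) := by
        rw [← ENNReal.ofReal_mul (div_nonneg (by linarith) (by linarith)), squarePairConst]
        have : 1 - θ ≠ 0 := by linarith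
        have : 3 - 2 * θ ≠ 0 := by linarith
        rw [show 2 - θ - 1 = 1 - θ by ring, show 2 * 2 - 2 * θ = 4 - 2 * θ by ring,
          show 2 * 2 - 1 - 2 * θ = 3 - 2 * θ by ring,
          show (2 - 1) * (2 * 2 - 2 - 2 * θ) = 2 * (1 - θ) by ring]
        field_simp

theorem summable_abs_and_tsum_le_of_tsum_ofReal_le {ι : Type*} {F : ι → ℝ} {B : ℝ} (hB : 0 ≤ B)
    (h : ∑' i, ENNReal.ofReal |F i| ≤ ENNReal.ofReal B) :
    (Summable fun i ↦ |F i|) ∧ ∑' i, F i ≤ B := by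
  have hsum : Summable fun i ↦ |F i| := by
    simpa only [ENNReal.toReal_ofReal (abs_nonneg _)] using
      ENNReal.summable_toReal (ne_top_of_le_ne_top ENNReal.ofReal_ne_top h)
  refine ⟨hsum, (hsum.of_abs.tsum_le_tsum (fun i ↦ le_abs_self _) hsum).trans ?_⟩
  rwa [← ENNReal.ofReal_tsum_of_nonneg (fun _ ↦ abs_nonneg _) hsum,
    ENNReal.ofReal_le_ofReal_iff hB] at h

theorem squarePairConst_nonneg (hθ : θ < 1) : 0 ≤ squarePairConst θ := by
  have : 0 < 1 - θ := by linarith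
  have : 0 < 3 - 2 * θ := by linarith
  have : 0 < 2 - θ := by linarith
  have : 0 < 4 - 2 * θ := by linarith
  unfold squarePairConst
  positivity

theorem summable_and_tsum_squarePair_le {a : ℕ → ℝ} {L M : ℝ} (hL : 0 ≤ L)
    (haL : ∀ n, |a n| ≤ L * n) (haM : ∀ n, |a n| ≤ M) (hθ : 0 ≤ θ) (hθ' : θ < 1) :
    (Summable fun q : SquarePair ↦ |a q.1.1 * a q.1.2 / ((q.1.1 : ℝ) * q.1.2)|) ∧
      ∑' q : SquarePair, a q.1.1 * a q.1.2 / ((q.1.1 : ℝ) * q.1.2) ≤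
        squarePairConst θ * (L ^ θ * M ^ (2 - θ)) := by
  have hM : 0 ≤ M := (abs_nonneg _).trans (haM 0)
  have hconst := squarePairConst_nonneg hθ'
  refine summable_abs_and_tsum_le_of_tsum_ofReal_le (by positivity) ?_
  calc ∑' q : SquarePair, ENNReal.ofReal |a q.1.1 * a q.1.2 / ((q.1.1 : ℝ) * q.1.2)|
      ≤ ∑' q : SquarePair, ENNReal.ofReal (L ^ θ * M ^ (2 - θ)) *
          ENNReal.ofReal (min (q.1.1 : ℝ) q.1.2 ^ θ * ((q.1.1 : ℝ) * q.1.2)⁻¹) := by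
        refine ENNReal.tsum_le_tsum fun q ↦ ?_
        rw [← ENNReal.ofReal_mul (by positivity), abs_div, div_eq_mul_inv, ← mul_assoc,
          abs_of_nonneg (by positivity : (0 : ℝ) ≤ q.1.1 * q.1.2)]
        gcongr
        exact abs_mul_le_rpow_mul_min_rpow hL (Nat.cast_nonneg _) (Nat.cast_nonneg _)
          (haL _) (haL _) (haM _) (haM _) hθ hθ'.le
    _ ≤ ENNReal.ofReal (L ^ θ * M ^ (2 - θ)) * ENNReal.ofReal (squarePairConst θ) := by
        rw [ENNReal.tsum_mul_left]
        gcongr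
        exact tsum_squarePair_ofReal_min_rpow_div_le hθ'
    _ = ENNReal.ofReal (squarePairConst θ * (L ^ θ * M ^ (2 - θ))) := by
        rw [mul_comm, ENNReal.ofReal_mul hconst]

end SquarePairSum

theorem squarePairConst_two_thirds : squarePairConst (2 / 3) = 132 / 5 := by
  norm_num [squarePairConst]

theorem two_rpow_four_thirds_le : (2 : ℝ) ^ ((4 : ℝ) / 3) ≤ 3 := by
  refine le_of_pow_le_pow_left₀ three_ne_zero zero_le_three ?_
  rw [← Real.rpow_mul_natCast zero_le_two]
  norm_num

theorem squarePairConst_two_thirds_mul_le {K C d : ℝ} (hK : 0 ≤ K) (hC : 0 ≤ C) (hd : 0 ≤ d) :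
    squarePairConst (2 / 3) *
        ((K * d) ^ ((2 : ℝ) / 3) * (2 * C) ^ (2 - (2 : ℝ) / 3)) ≤
      92 * d ^ ((2 : ℝ) / 3) * K ^ ((2 : ℝ) / 3) * C ^ ((4 : ℝ) / 3) := by
  have hexp : (2 : ℝ) - 2 / 3 = 4 / 3 := by norm_num
  rw [squarePairConst_two_thirds, hexp, Real.mul_rpow hK hd, Real.mul_rpow zero_le_two hC]
  calc 132 / 5 * (K ^ ((2 : ℝ) / 3) * d ^ ((2 : ℝ) / 3) *
          ((2 : ℝ) ^ ((4 : ℝ) / 3) * C ^ ((4 : ℝ) / 3)))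
      = 132 / 5 * (2 : ℝ) ^ ((4 : ℝ) / 3) *
          (d ^ ((2 : ℝ) / 3) * K ^ ((2 : ℝ) / 3) * C ^ ((4 : ℝ) / 3)) := by ring
    _ ≤ 92 * (d ^ ((2 : ℝ) / 3) * K ^ ((2 : ℝ) / 3) * C ^ ((4 : ℝ) / 3)) := by
        gcongr
        linarith [two_rpow_four_thirds_le]
    _ = 92 * d ^ ((2 : ℝ) / 3) * K ^ ((2 : ℝ) / 3) * C ^ ((4 : ℝ) / 3) := by ring

end SquareProduct

open SquareProduct in
theorem stmt_19_general {f : ℝ → ℝ} {K C θ : ℝ} (hLip : ∀ x y : ℝ, |f x - f y| ≤ K * |x - y|)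
    (hbd : ∀ x : ℝ, |f x| ≤ C) (α β : ℝ) (hθ : 0 ≤ θ) (hθ' : θ < 1) :
    (Summable fun q : SquarePair ↦
        |(f (q.1.1 * α) - f (q.1.1 * β)) * (f (q.1.2 * α) - f (q.1.2 * β)) /
          ((q.1.1 : ℝ) * q.1.2)|) ∧
      ∑' q : SquarePair,
          (f (q.1.1 * α) - f (q.1.1 * β)) * (f (q.1.2 * α) - f (q.1.2 * β)) /
            ((q.1.1 : ℝ) * q.1.2) ≤
        squarePairConst θ * ((K * |α - β|) ^ θ * (2 * C) ^ (2 - θ)) := by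
  have hdist (n : ℕ) : |f (n * α) - f (n * β)| ≤ K * |α - β| * n := by
    refine (hLip _ _).trans_eq ?_
    rw [← mul_sub, abs_mul, Nat.abs_cast, mul_comm (n : ℝ), mul_assoc]
  have hosc (n : ℕ) : |f (n * α) - f (n * β)| ≤ 2 * C :=
    (abs_sub _ _).trans (by linarith [hbd (n * α), hbd (n * β)])
  exact summable_and_tsum_squarePair_le (a := fun n ↦ f (n * α) - f (n * β))
    ((abs_nonneg _).trans (hLip α β)) hdist hosc hθ hθ'

/-- If `f : ℝ → ℝ` is Lipschitz with constant `K` and bounded by `C`, then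
for all real `α, β`, the sum over pairs of positive integers `(n,m)` with
`n·m` a perfect square of `(f(nα) − f(nβ))(f(mα) − f(mβ))/(nm)` converges
absolutely and is at most `92 |α−β|^{2/3} K^{2/3} C^{4/3}`. -/
theorem stmt_19 (f : ℝ → ℝ) (K C : ℝ) (hK : 0 < K) (hC : 0 < C)
    (hLip : ∀ x y : ℝ, |f x - f y| ≤ K * |x - y|)
    (hbd : ∀ x : ℝ, |f x| ≤ C) (α β : ℝ) :
    Summable (fun q : {q : ℕ × ℕ // 0 < q.1 ∧ 0 < q.2 ∧ IsSquare (q.1 * q.2)} =>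
        |(f ((q : ℕ × ℕ).1 * α) - f ((q : ℕ × ℕ).1 * β)) *
            (f ((q : ℕ × ℕ).2 * α) - f ((q : ℕ × ℕ).2 * β)) /
          (((q : ℕ × ℕ).1 : ℝ) * ((q : ℕ × ℕ).2 : ℝ))|) ∧
      ∑' q : {q : ℕ × ℕ // 0 < q.1 ∧ 0 < q.2 ∧ IsSquare (q.1 * q.2)},
          (f ((q : ℕ × ℕ).1 * α) - f ((q : ℕ × ℕ).1 * β)) *
              (f ((q : ℕ × ℕ).2 * α) - f ((q : ℕ × ℕ).2 * β)) /
            (((q : ℕ × ℕ).1 : ℝ) * ((q : ℕ × ℕ).2 : ℝ)) ≤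
        92 * |α - β| ^ ((2 : ℝ) / 3) * K ^ ((2 : ℝ) / 3) * C ^ ((4 : ℝ) / 3) := by
  have hnum := SquareProduct.squarePairConst_two_thirds_mul_le hK.le hC.le (abs_nonneg (α - β))
  exact (stmt_19_general hLip hbd α β (by norm_num) (by norm_num)).imp_right hnum.trans'
end
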